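/- Let p ≡ 1 (mod 3). Among the p^7 binary sextic forms f over F_p for which y³ = f(x,z) is reducible over F̄_p (i.e., f = a h³), exactly (p³ − 1)/3 give a factorization into three distinct linear factors in y defined over F_p, exactly 2(p³ − 1)/3 give three conjugate factors over F_{p³}, and exactly 1 gives a triple factor (namely f ≡ 0). -/

import Mathlib

/-- The binary sextic form `f(x,z) = Σ_{i=0}^{6} cᵢ xⁱ z^{6−i}` over `F_p`. -/
noncomputable def sexticForm9 (p : ℕ) [Fact p.Prime] (c : Fin 7 → ZMod p) :
    MvPolynomial (Fin 2) (ZMod p) :=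
  ∑ i : Fin 7, MvPolynomial.C (c i) * MvPolynomial.X 0 ^ (i : ℕ) *
    MvPolynomial.X 1 ^ (6 - (i : ℕ))

/-- `F = y³ − f(x,z)`, viewed in `F_p[x,z][y]`. -/
noncomputable def sexticCurve9 (p : ℕ) [Fact p.Prime] (c : Fin 7 → ZMod p) :
    Polynomial (MvPolynomial (Fin 2) (ZMod p)) :=
  Polynomial.X ^ 3 - Polynomial.C (sexticForm9 p c)

/-!
Unique factorization shows that a polynomial over a field is determined by its `n`-th power together
with its leading coefficient. This has two consequences.

* Rescaling `hⁿ` to have the leading coefficient of `h` puts the nonzero forms of degree `d` in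
  bijection with the nonzero forms `a hⁿ`, while `h ↦ hⁿ` itself has the torsors under the `n`-th
  roots of unity as fibres. So one in `n` of the nonzero forms `a hⁿ` is an `n`-th power.
* A monic `n`-th root of a polynomial over `K` is fixed by every automorphism over `K`, so a
  polynomial that becomes an `n`-th power over a Galois extension `L` is already `a hⁿ` over `K`.
  Conversely, if `K` and `L` are finite, `|K| ≡ 1 (mod n)` and `n ∣ [L : K]`, then every `a ∈ K` is
  a norm from `L`, and norms are `n`-th powers in `L`.

For `n = 3`, the form `f` yields distinct rational factors, nonrational factors or a triple factor
according to whether it is a nonzero cube, some `a h³` which is not a cube, or zero.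
-/

open MvPolynomial

section FiniteField

theorem exists_isPrimitiveRoot_of_dvd_card_sub_one {K : Type*} [Field K] [Finite K] {n : ℕ}
    (hn : n ∣ Nat.card K - 1) : ∃ ζ : K, IsPrimitiveRoot ζ n := by
  obtain ⟨k, hk⟩ := hn
  obtain ⟨g, hg⟩ := IsCyclic.exists_ofOrder_eq_natCard (α := Kˣ)
  rw [Nat.card_units, hk, mul_comm] at hg
  refine ⟨(g ^ k : Kˣ), IsPrimitiveRoot.coe_units_iff.mpr ?_⟩
  refine (IsPrimitiveRoot.iff_orderOf.mpr hg).pow ?_ rfl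
  rw [← hg]
  exact orderOf_pos g

theorem exists_pow_eq_algebraMap {K L : Type*} [Field K] [Field L] [Algebra K L] [Finite L] {n : ℕ}
    (hK : Nat.card K ≡ 1 [MOD n]) (hL : n ∣ Module.finrank K L) (a : K) :
    ∃ u : L, u ^ n = algebraMap K L a := by
  have := Finite.of_injective _ (algebraMap K L).injective
  obtain ⟨x, rfl⟩ := FiniteField.norm_surjective K L a
  have hgeom : (Nat.card L - 1) / (Nat.card K - 1) =
      ∑ i ∈ Finset.range (Module.finrank K L), Nat.card K ^ i := by
    rw [Nat.geomSum_eq Finite.one_lt_card, ← Module.natCard_eq_pow_finrank]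
  have hdvd : n ∣ ∑ i ∈ Finset.range (Module.finrank K L), Nat.card K ^ i := by
    rw [← Nat.modEq_zero_iff_dvd]
    calc ∑ i ∈ Finset.range (Module.finrank K L), Nat.card K ^ i
      _ ≡ ∑ _i ∈ Finset.range (Module.finrank K L), 1 [MOD n] :=
        Nat.ModEq.sum fun i _ => by simpa using hK.pow i
      _ = Module.finrank K L := by simp
      _ ≡ 0 [MOD n] := Nat.modEq_zero_iff_dvd.mpr hL
  obtain ⟨k, hk⟩ := hdvd
  exact ⟨x ^ k, by rw [FiniteField.algebraMap_norm_eq_pow, hgeom, hk, mul_comm, pow_mul]⟩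

end FiniteField

section RootsOfUnity

variable {R : Type*} [CommRing R]

theorem mul_ncard_image_pow [IsDomain R] {n : ℕ} {ζ : R}
    (hζ : IsPrimitiveRoot ζ n) (hn : n ≠ 0) {s : Set R} (hs : s.Finite) (h0 : 0 ∉ s)
    (hroots : ∀ x ∈ s, ∀ y, y ^ n = x ^ n → y ∈ s) :
    n * ((· ^ n) '' s).ncard = s.ncard := by
  classical
  lift s to Finset R using hs
  rw [← Finset.coe_image, Set.ncard_coe_finset, Set.ncard_coe_finset,
    Finset.card_eq_sum_card_image (· ^ n) s, Finset.sum_const_nat, mul_comm]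
  intro b hb
  obtain ⟨x, hx, rfl⟩ := Finset.mem_image.mp hb
  have hx0 : x ^ n ≠ 0 := pow_ne_zero n fun h => h0 (h ▸ hx)
  have hfiber : {y ∈ s | y ^ n = x ^ n} = (Polynomial.nthRoots n (x ^ n)).toFinset := by
    ext y
    simpa [Polynomial.mem_nthRoots (Nat.pos_of_ne_zero hn)] using hroots x hx y
  rw [hfiber, Multiset.toFinset_card_of_nodup (hζ.nthRoots_nodup hx0), hζ.card_nthRoots,
    if_pos ⟨x, rfl⟩]

theorem mem_range_of_pow_eq_map_pow [IsDomain R] {S : Type*} [CommRing S] {φ : S →+* R} {n : ℕ}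
    {ζ : S} (hζ : IsPrimitiveRoot (φ ζ) n) (hn : 0 < n) {x : R} {y : S} (h : x ^ n = φ y ^ n) :
    x ∈ Set.range φ := by
  have hx : x ∈ Polynomial.nthRoots n (φ y ^ n) := (Polynomial.mem_nthRoots hn).mpr h
  obtain ⟨i, -, rfl⟩ := Multiset.mem_map.mp (hζ.nthRoots_eq rfl ▸ hx)
  exact ⟨ζ ^ i * y, by rw [map_mul, map_pow]⟩

theorem exists_X_pow_sub_C_eq_X_sub_C_pow_iff [NoZeroDivisors R] {n : ℕ} (hn : 2 ≤ n)
    (hn0 : (n : R) ≠ 0) {f : R} :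
    (∃ h, (Polynomial.X ^ n - Polynomial.C f : Polynomial R) =
      (Polynomial.X - Polynomial.C h) ^ n) ↔ f = 0 := by
  constructor
  · rintro ⟨h, hf⟩
    have hderiv : (n : R) * h ^ (n - 1) = 0 := by
      simpa [Polynomial.derivative_X_sub_C_pow, Polynomial.derivative_X_pow,
        show n - 1 ≠ 0 by omega] using
        congrArg (fun P => (Polynomial.derivative P).eval h) hf
    have hh : h = 0 := eq_zero_of_pow_eq_zero ((mul_eq_zero.mp hderiv).resolve_left hn0)
    simpa [hh, show n ≠ 0 by omega] using congrArg (Polynomial.eval 0) hf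
  · rintro rfl
    exact ⟨0, by simp⟩

theorem pow_three_eq_of_X_pow_three_sub_C_eq {f h₁ h₂ h₃ : R}
    (hf : (Polynomial.X ^ 3 - Polynomial.C f : Polynomial R) =
      (Polynomial.X - Polynomial.C h₁) * (Polynomial.X - Polynomial.C h₂) *
        (Polynomial.X - Polynomial.C h₃)) :
    ∀ h ∈ ({h₁, h₂, h₃} : Set R), h ^ 3 = f := by
  rintro h (rfl | rfl | rfl) <;>
    simpa [sub_eq_zero] using congrArg (Polynomial.eval h) hf

variable [IsDomain R] {ζ : R}

theorem X_pow_three_sub_C_pow_three (hζ : IsPrimitiveRoot ζ 3) (h : R) :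
    (Polynomial.X ^ 3 - Polynomial.C (h ^ 3) : Polynomial R) =
      (Polynomial.X - Polynomial.C h) * (Polynomial.X - Polynomial.C (ζ * h)) *
        (Polynomial.X - Polynomial.C (ζ ^ 2 * h)) := by
  have hsum : 1 + Polynomial.C ζ + Polynomial.C ζ ^ 2 = 0 := by
    simpa [Finset.sum_range_succ] using
      congrArg Polynomial.C (hζ.geom_sum_eq_zero (by norm_num))
  simp only [map_mul, map_pow]
  linear_combination (Polynomial.X ^ 2 * Polynomial.C h -
    Polynomial.X * Polynomial.C h ^ 2 * Polynomial.C ζ +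
    Polynomial.C h ^ 3 * (Polynomial.C ζ - 1)) * hsum

theorem exists_distinct_linear_factors_iff (hζ : IsPrimitiveRoot ζ 3) {f : R} :
    (∃ h₁ h₂ h₃ : R, h₁ ≠ h₂ ∧ h₁ ≠ h₃ ∧ h₂ ≠ h₃ ∧
      (Polynomial.X ^ 3 - Polynomial.C f : Polynomial R) =
        (Polynomial.X - Polynomial.C h₁) * (Polynomial.X - Polynomial.C h₂) *
          (Polynomial.X - Polynomial.C h₃)) ↔
      f ≠ 0 ∧ ∃ h, h ^ 3 = f := by
  constructor
  · rintro ⟨h₁, h₂, h₃, h₁₂, -, -, hf⟩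
    have hroot := pow_three_eq_of_X_pow_three_sub_C_eq hf
    refine ⟨?_, h₁, hroot h₁ (by simp)⟩
    rintro rfl
    exact h₁₂ ((eq_zero_of_pow_eq_zero (hroot h₁ (by simp))).trans
      (eq_zero_of_pow_eq_zero (hroot h₂ (by simp))).symm)
  · rintro ⟨hf, h, rfl⟩
    have hinj := hζ.injOn_pow_mul (ne_zero_pow three_ne_zero hf)
    refine ⟨h, ζ * h, ζ ^ 2 * h, ?_, ?_, ?_, X_pow_three_sub_C_pow_three hζ h⟩
    · simpa using hinj.ne (x := 0) (y := 1) (by simp) (by simp) (by simp)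
    · simpa using hinj.ne (x := 0) (y := 2) (by simp) (by simp) (by simp)
    · simpa using hinj.ne (x := 1) (y := 2) (by simp) (by simp) (by simp)

end RootsOfUnity

section Homogeneity

variable {σ R : Type*} [CommSemiring R]

/-- The homomorphism `f(x) ↦ f(x * T)` into polynomials in `T`: it turns the grading of `f` into the
degree in `T`. -/
noncomputable def dilation : MvPolynomial σ R →ₐ[R] Polynomial (MvPolynomial σ R) :=
  aeval fun i => Polynomial.C (X i) * Polynomial.X

theorem dilation_monomial (s : σ →₀ ℕ) (a : R) :
    dilation (monomial s a) = Polynomial.C (monomial s a) * Polynomial.X ^ s.degree := by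
  rw [dilation, aeval_monomial, monomial_eq]
  simp only [Finsupp.prod, Finsupp.degree_apply, mul_pow, Finset.prod_mul_distrib,
    Finset.prod_pow_eq_pow_sum, map_mul, map_prod, map_pow, mul_assoc]
  rfl

theorem coeff_dilation (f : MvPolynomial σ R) (n : ℕ) :
    (dilation f).coeff n = homogeneousComponent n f := by
  induction f using MvPolynomial.induction_on' with
  | monomial s a =>
    rw [dilation_monomial, Polynomial.coeff_C_mul_X_pow,
      homogeneousComponent_of_mem (isHomogeneous_monomial a rfl)]
  | add f g hf hg => simp [hf, hg]

theorem eval_one_dilation (f : MvPolynomial σ R) : (dilation f).eval 1 = f := by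
  induction f using MvPolynomial.induction_on' with
  | monomial s a => simp [dilation_monomial]
  | add f g hf hg => simp [hf, hg]

theorem isHomogeneous_iff_dilation_eq {f : MvPolynomial σ R} {n : ℕ} :
    f.IsHomogeneous n ↔ dilation f = Polynomial.C f * Polynomial.X ^ n := by
  constructor
  · intro hf
    ext1 k
    rw [coeff_dilation, Polynomial.coeff_C_mul_X_pow, homogeneousComponent_of_mem hf]
  · intro hf
    have hcomponent := coeff_dilation f n
    rw [hf, Polynomial.coeff_C_mul_X_pow, if_pos rfl] at hcomponent
    exact hcomponent ▸ homogeneousComponent_isHomogeneous n f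

theorem isHomogeneous_of_pow {K : Type*} [Field K] {h : MvPolynomial σ K} {n d : ℕ} (hn : n ≠ 0)
    (hpow : (h ^ n).IsHomogeneous (d * n)) : h.IsHomogeneous d := by
  have hassoc : Associated (Polynomial.C h * Polynomial.X ^ d) (dilation h) := by
    rw [← Associated.pow_iff hn, mul_pow, ← map_pow, ← pow_mul, ← map_pow,
      isHomogeneous_iff_dilation_eq.mp hpow]
  obtain ⟨u, hu⟩ := hassoc
  obtain ⟨c, -, hc⟩ := Polynomial.isUnit_iff.mp u.isUnit
  rw [← hc] at hu
  have hone : h * c = h := by simpa [eval_one_dilation] using congrArg (Polynomial.eval 1) hu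
  rw [isHomogeneous_iff_dilation_eq, ← hu, mul_right_comm, ← map_mul, hone]

end Homogeneity

section Powers

variable {σ K : Type*} [Field K] (m : MonomialOrder σ) {n : ℕ}

theorem eq_of_pow_eq_pow_of_leadingCoeff_eq (hn : n ≠ 0) {f g : MvPolynomial σ K}
    (hpow : f ^ n = g ^ n) (hlc : m.leadingCoeff f = m.leadingCoeff g) : f = g := by
  obtain ⟨u, rfl⟩ : Associated f g := (Associated.pow_iff hn).mp (.of_eq hpow)
  obtain ⟨c, -, hc⟩ := isUnit_iff_eq_C_of_isReduced.mp u.isUnit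
  rcases eq_or_ne f 0 with rfl | hf
  · simp
  have hc1 : c = 1 := by simpa [hc, hf] using hlc
  simp [hc, hc1]

/-- The `n`-th power of `h`, rescaled to have the same leading coefficient as `h`. The scalar
multiples of `n`-th powers are exactly its values, each taken once. -/
noncomputable def normalizedPow (n : ℕ) (h : MvPolynomial σ K) : MvPolynomial σ K :=
  C (m.leadingCoeff h ^ (n - 1))⁻¹ * h ^ n

theorem leadingCoeff_normalizedPow (hn : n ≠ 0) (h : MvPolynomial σ K) :
    m.leadingCoeff (normalizedPow m n h) = m.leadingCoeff h := by
  rcases eq_or_ne h 0 with rfl | hh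
  · simp [normalizedPow, hn]
  have hlc : m.leadingCoeff h ≠ 0 := m.leadingCoeff_ne_zero_iff.mpr hh
  simp only [normalizedPow, m.leadingCoeff_mul, m.leadingCoeff_C, m.leadingCoeff_pow]
  rw [← pow_sub_one_mul hn, inv_mul_cancel_left₀ (pow_ne_zero _ hlc)]

theorem normalizedPow_eq_zero_iff (hn : n ≠ 0) {h : MvPolynomial σ K} :
    normalizedPow m n h = 0 ↔ h = 0 := by
  rw [← m.leadingCoeff_eq_zero_iff, leadingCoeff_normalizedPow m hn, m.leadingCoeff_eq_zero_iff]

theorem normalizedPow_injective (hn : n ≠ 0) :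
    Function.Injective (normalizedPow m n : MvPolynomial σ K → _) := by
  intro f g hfg
  have hlc : m.leadingCoeff f = m.leadingCoeff g := by
    rw [← leadingCoeff_normalizedPow m hn, hfg, leadingCoeff_normalizedPow m hn]
  rcases eq_or_ne g 0 with rfl | hg
  · simpa using hlc
  refine eq_of_pow_eq_pow_of_leadingCoeff_eq m hn ?_ hlc
  simpa [normalizedPow, hlc, hg] using hfg

theorem exists_normalizedPow_eq_C_mul_pow (hn : n ≠ 0) (a : K) (h : MvPolynomial σ K) :
    ∃ g, normalizedPow m n g = C a * h ^ n := by
  rcases eq_or_ne h 0 with rfl | hh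
  · exact ⟨0, by simp [normalizedPow, hn]⟩
  rcases eq_or_ne a 0 with rfl | ha
  · exact ⟨0, by simp [normalizedPow, hn]⟩
  have hlc : m.leadingCoeff h ≠ 0 := m.leadingCoeff_ne_zero_iff.mpr hh
  refine ⟨C (a * m.leadingCoeff h ^ (n - 1)) * h, ?_⟩
  rw [normalizedPow, mul_pow, ← mul_assoc, ← C_pow, ← C_mul, m.leadingCoeff_mul, m.leadingCoeff_C]
  congr 2
  obtain ⟨k, rfl⟩ := Nat.exists_eq_succ_of_ne_zero hn
  simp only [Nat.succ_eq_add_one, Nat.add_sub_cancel]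
  field_simp
  ring

theorem isHomogeneous_normalizedPow_iff (hn : n ≠ 0) {h : MvPolynomial σ K} {d : ℕ} :
    (normalizedPow m n h).IsHomogeneous (d * n) ↔ h.IsHomogeneous d := by
  refine ⟨fun hh => ?_, fun hh => (hh.pow n).C_mul _⟩
  rcases eq_or_ne h 0 with rfl | h0
  · exact isHomogeneous_zero σ K d
  have hlc : m.leadingCoeff h ^ (n - 1) ≠ 0 := pow_ne_zero _ (m.leadingCoeff_ne_zero_iff.mpr h0)
  have hpow : h ^ n = C (m.leadingCoeff h ^ (n - 1)) * normalizedPow m n h := by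
    rw [normalizedPow, ← mul_assoc, ← C_mul, mul_inv_cancel₀ hlc, C_1, one_mul]
  exact isHomogeneous_of_pow hn (hpow ▸ hh.C_mul _)

theorem ncard_isHomogeneous_C_mul_pow (hn : n ≠ 0) (d : ℕ) :
    {f : MvPolynomial σ K | f.IsHomogeneous (d * n) ∧ f ≠ 0 ∧ ∃ a h, f = C a * h ^ n}.ncard =
      {h : MvPolynomial σ K | h.IsHomogeneous d ∧ h ≠ 0}.ncard := by
  obtain ⟨_, _⟩ := exists_wellFoundedGT σ
  let m : MonomialOrder σ := .lex
  refine .trans ?_ (Set.ncard_image_of_injective _ (normalizedPow_injective m hn))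
  congr 1
  ext f
  constructor
  · rintro ⟨hf, hf0, a, h, rfl⟩
    obtain ⟨g, hg⟩ := exists_normalizedPow_eq_C_mul_pow m hn a h
    rw [← hg] at hf hf0
    exact ⟨g, ⟨(isHomogeneous_normalizedPow_iff m hn).mp hf,
      mt (normalizedPow_eq_zero_iff m hn).mpr hf0⟩, hg⟩
  · rintro ⟨h, ⟨hh, hh0⟩, rfl⟩
    exact ⟨(isHomogeneous_normalizedPow_iff m hn).mpr hh,
      mt (normalizedPow_eq_zero_iff m hn).mp hh0, _, h, rfl⟩

variable {ζ : K} {d : ℕ}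

theorem mul_ncard_isHomogeneous_pow (hζ : IsPrimitiveRoot ζ n) (hn : n ≠ 0)
    (hfin : {h : MvPolynomial σ K | h.IsHomogeneous d}.Finite) :
    n * {f : MvPolynomial σ K | f.IsHomogeneous (d * n) ∧ f ≠ 0 ∧ ∃ h, h ^ n = f}.ncard =
      {h : MvPolynomial σ K | h.IsHomogeneous d ∧ h ≠ 0}.ncard := by
  have himage : {f : MvPolynomial σ K | f.IsHomogeneous (d * n) ∧ f ≠ 0 ∧ ∃ h, h ^ n = f} =
      (· ^ n) '' {h : MvPolynomial σ K | h.IsHomogeneous d ∧ h ≠ 0} := by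
    ext f
    constructor
    · rintro ⟨hf, hf0, h, rfl⟩
      exact ⟨h, ⟨isHomogeneous_of_pow hn hf, ne_zero_pow hn hf0⟩, rfl⟩
    · rintro ⟨h, ⟨hh, hh0⟩, rfl⟩
      exact ⟨hh.pow n, pow_ne_zero n hh0, h, rfl⟩
  rw [himage]
  refine mul_ncard_image_pow (hζ.map_of_injective (C_injective σ K)) hn
    (hfin.subset fun h hh => hh.1) (fun h0 => h0.2 rfl) ?_
  rintro x ⟨hx, hx0⟩ y hy
  exact ⟨isHomogeneous_of_pow hn (hy ▸ hx.pow n), ne_zero_pow hn (hy ▸ pow_ne_zero n hx0)⟩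

theorem mul_ncard_isHomogeneous_C_mul_pow_not_pow (hζ : IsPrimitiveRoot ζ n) (hn : n ≠ 0)
    (hfin : {h : MvPolynomial σ K | h.IsHomogeneous d}.Finite) :
    n * {f : MvPolynomial σ K | f.IsHomogeneous (d * n) ∧
      (∃ a h, f = C a * h ^ n) ∧ ¬∃ h, h ^ n = f}.ncard =
      (n - 1) * {h : MvPolynomial σ K | h.IsHomogeneous d ∧ h ≠ 0}.ncard := by
  have hdiff : {f : MvPolynomial σ K | f.IsHomogeneous (d * n) ∧
      (∃ a h, f = C a * h ^ n) ∧ ¬∃ h, h ^ n = f} =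
      {f | f.IsHomogeneous (d * n) ∧ f ≠ 0 ∧ ∃ a h, f = C a * h ^ n} \
        {f | f.IsHomogeneous (d * n) ∧ f ≠ 0 ∧ ∃ h, h ^ n = f} := by
    ext f
    have hne_zero : (¬∃ h, h ^ n = f) → f ≠ 0 := fun hf hf0 => hf ⟨0, by simp [hf0, hn]⟩
    simp only [Set.mem_ofPred_eq, Set.mem_sdiff]
    tauto
  have hsub : {f : MvPolynomial σ K | f.IsHomogeneous (d * n) ∧ f ≠ 0 ∧ ∃ h, h ^ n = f} ⊆
      {f | f.IsHomogeneous (d * n) ∧ f ≠ 0 ∧ ∃ a h, f = C a * h ^ n} :=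
    fun f ⟨hf, hf0, h, hh⟩ => ⟨hf, hf0, 1, h, by simp [hh]⟩
  have hfin_pow :
      {f : MvPolynomial σ K | f.IsHomogeneous (d * n) ∧ f ≠ 0 ∧ ∃ h, h ^ n = f}.Finite :=
    (hfin.image (· ^ n)).subset fun f ⟨hf, _, h, hh⟩ => ⟨h, isHomogeneous_of_pow hn (hh ▸ hf), hh⟩
  rw [hdiff, Set.ncard_sdiff hsub hfin_pow, Nat.mul_sub,
    mul_ncard_isHomogeneous_pow hζ hn hfin, ncard_isHomogeneous_C_mul_pow hn, Nat.sub_one_mul]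

end Powers

section Descent

variable {σ K L : Type*} [Field K] [Field L] [Algebra K L] (m : MonomialOrder σ) {n : ℕ}

theorem leadingCoeff_map_of_injective {R S : Type*} [CommSemiring R] [CommSemiring S]
    {φ : R →+* S}
    (hφ : Function.Injective φ) (f : MvPolynomial σ R) :
    m.leadingCoeff (map φ f) = φ (m.leadingCoeff f) := by
  have hdeg : m.degree (map φ f) = m.degree f := by
    simp only [MonomialOrder.degree, support_map_of_injective f hφ]
  rw [MonomialOrder.leadingCoeff, hdeg, coeff_map, MonomialOrder.leadingCoeff]

variable [IsGalois K L]

theorem mem_range_map_of_galois_invariant {g : MvPolynomial σ L}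
    (hg : ∀ τ : Gal(L/K), map (τ : L →+* L) g = g) : g ∈ Set.range (map (algebraMap K L)) := by
  rw [mem_range_map_iff_coeffs_subset]
  intro c hc
  obtain ⟨s, -, rfl⟩ := mem_coeffs_iff.mp hc
  refine (InfiniteGalois.mem_range_algebraMap_iff_fixed _).mpr fun τ => ?_
  have hcoeff := congrArg (coeff s) (hg τ)
  rwa [coeff_map] at hcoeff

theorem mem_range_map_of_monic_of_pow_eq (hn : n ≠ 0) {f : MvPolynomial σ K} {g : MvPolynomial σ L}
    (hg : m.Monic g) (hpow : g ^ n = map (algebraMap K L) f) :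
    g ∈ Set.range (map (algebraMap K L)) := by
  refine mem_range_map_of_galois_invariant fun τ =>
    eq_of_pow_eq_pow_of_leadingCoeff_eq m hn ?_ ?_
  · have hτ : (τ : L →+* L).comp (algebraMap K L) = algebraMap K L := by ext; simp
    rw [← map_pow, hpow, map_map, hτ]
  · rw [leadingCoeff_map_of_injective m (τ : L →+* L).injective, hg, map_one]

theorem exists_eq_C_mul_pow_of_pow_eq_map (hn : n ≠ 0) {f : MvPolynomial σ K}
    {g : MvPolynomial σ L} (hpow : g ^ n = map (algebraMap K L) f) :
    ∃ a h, f = C a * h ^ n := by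
  obtain ⟨_, _⟩ := exists_wellFoundedGT σ
  let m : MonomialOrder σ := .lex
  rcases eq_or_ne f 0 with rfl | hf
  · exact ⟨0, 0, by simp⟩
  have hlc : m.leadingCoeff g ^ n = algebraMap K L (m.leadingCoeff f) := by
    rw [← m.leadingCoeff_pow, hpow, leadingCoeff_map_of_injective m (algebraMap K L).injective]
  have hlf : m.leadingCoeff f ≠ 0 := m.leadingCoeff_ne_zero_iff.mpr hf
  have hlg : m.leadingCoeff g ≠ 0 := ne_zero_pow hn (by simpa [hlc] using hf)
  have hmonic : m.Monic (C (m.leadingCoeff g)⁻¹ * g) := by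
    rw [MonomialOrder.Monic, m.leadingCoeff_mul, m.leadingCoeff_C, inv_mul_cancel₀ hlg]
  have hmonic_pow : (C (m.leadingCoeff g)⁻¹ * g) ^ n =
      map (algebraMap K L) (C (m.leadingCoeff f)⁻¹ * f) := by
    rw [mul_pow, hpow, ← C_pow, inv_pow, hlc, map_mul, map_C, map_inv₀ (algebraMap K L)]
  obtain ⟨h, hh⟩ := mem_range_map_of_monic_of_pow_eq m hn hmonic hmonic_pow
  rw [← hh, ← map_pow] at hmonic_pow
  refine ⟨m.leadingCoeff f, h, ?_⟩
  rw [map_injective _ (algebraMap K L).injective hmonic_pow, ← mul_assoc, ← C_mul,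
    mul_inv_cancel₀ hlf, C_1, one_mul]

theorem exists_nonrational_linear_factors_iff {ζ : K} (hζ : IsPrimitiveRoot ζ 3)
    (hroot : ∀ a : K, ∃ u : L, u ^ 3 = algebraMap K L a) {f : MvPolynomial σ K} :
    (∃ g₁ g₂ g₃ : MvPolynomial σ L,
      Polynomial.map (map (algebraMap K L) : _ →+* _) (Polynomial.X ^ 3 - Polynomial.C f) =
        (Polynomial.X - Polynomial.C g₁) * (Polynomial.X - Polynomial.C g₂) *
          (Polynomial.X - Polynomial.C g₃) ∧
      ∀ g ∈ ({g₁, g₂, g₃} : Set (MvPolynomial σ L)), g ∉ Set.range (map (algebraMap K L))) ↔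
      (∃ a h, f = C a * h ^ 3) ∧ ¬∃ h, h ^ 3 = f := by
  have hinj := map_injective (σ := σ) (algebraMap K L) (algebraMap K L).injective
  have hζL := (hζ.map_of_injective (C_injective σ K)).map_of_injective hinj
  simp only [Polynomial.map_sub, Polynomial.map_pow, Polynomial.map_X, Polynomial.map_C]
  constructor
  · rintro ⟨g₁, g₂, g₃, hfactor, hnot_range⟩
    have hg := pow_three_eq_of_X_pow_three_sub_C_eq hfactor g₁ (by simp)
    refine ⟨exists_eq_C_mul_pow_of_pow_eq_map three_ne_zero hg, ?_⟩
    rintro ⟨h, rfl⟩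
    rw [map_pow] at hg
    exact hnot_range g₁ (by simp) (mem_range_of_pow_eq_map_pow hζL three_pos hg)
  · rintro ⟨⟨a, h, rfl⟩, hnot_cube⟩
    obtain ⟨u, hu⟩ := hroot a
    have hcube : (C u * map (algebraMap K L) h) ^ 3 = map (algebraMap K L) (C a * h ^ 3) := by
      simp [mul_pow, ← C_pow, hu]
    have hfactor := X_pow_three_sub_C_pow_three hζL (C u * map (algebraMap K L) h)
    rw [hcube] at hfactor
    refine ⟨_, _, _, hfactor, ?_⟩
    rintro g hg ⟨k, rfl⟩
    have hk := pow_three_eq_of_X_pow_three_sub_C_eq hfactor _ hg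
    exact hnot_cube ⟨k, hinj (by rw [map_pow, hk])⟩

end Descent

section BinaryForms

variable {R : Type*} [CommSemiring R]

/-- The binary form `∑ cᵢ xⁱ zⁿ⁻ⁱ` of degree `n`, with `x = X 0` and `z = X 1`, as a function of its
coefficients. -/
noncomputable def binaryForm (n : ℕ) (c : Fin (n + 1) → R) : MvPolynomial (Fin 2) R :=
  ∑ i : Fin (n + 1), C (c i) * X 0 ^ (i : ℕ) * X 1 ^ (n - (i : ℕ))

theorem homogenize_eq_binaryForm (n : ℕ) (P : Polynomial R) :
    P.homogenize n = binaryForm n fun i => P.coeff i := by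
  rw [Polynomial.homogenize, Finset.Nat.sum_antidiagonal_eq_sum_range_succ_mk,
    Finset.sum_range, binaryForm]
  refine Finset.sum_congr rfl fun i _ => ?_
  rw [monomial_eq]
  simp [mul_assoc]

theorem isHomogeneous_binaryForm (n : ℕ) (c : Fin (n + 1) → R) :
    (binaryForm n c).IsHomogeneous n := by
  refine IsHomogeneous.sum _ _ _ fun i _ => ?_
  have hterm := (isHomogeneous_C_mul_X_pow (c i) 0 i).mul
    (isHomogeneous_X_pow (R := R) (1 : Fin 2) (n - i))
  rwa [Nat.add_sub_cancel' i.is_le] at hterm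

theorem binaryForm_injective (n : ℕ) :
    Function.Injective (binaryForm n : (Fin (n + 1) → R) → _) := by
  intro c d hcd
  funext i
  simpa [binaryForm, Polynomial.finsetSum_coeff, Polynomial.coeff_C_mul_X_pow, Fin.val_inj] using
    congrArg (fun f => (aeval ![Polynomial.X, 1] f : Polynomial R).coeff i) hcd

theorem range_binaryForm (n : ℕ) :
    Set.range (binaryForm n : (Fin (n + 1) → R) → _) = {f | f.IsHomogeneous n} := by
  ext f
  constructor
  · rintro ⟨c, rfl⟩
    exact isHomogeneous_binaryForm n c
  · intro hf
    exact ⟨_, (homogenize_eq_binaryForm n _).symm.trans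
      (Polynomial.homogenize_eq_of_isHomogeneous hf rfl)⟩

theorem card_subtype_binaryForm (n : ℕ) (P : MvPolynomial (Fin 2) R → Prop) :
    Nat.card {c : Fin (n + 1) → R // P (binaryForm n c)} =
      {f | f.IsHomogeneous n ∧ P f}.ncard := by
  rw [Set.ofPred_and, ← range_binaryForm, ← Set.image_preimage_eq_range_inter,
    Set.ncard_image_of_injective _ (binaryForm_injective n), ← Nat.card_coe_set_eq]
  rfl

theorem finite_isHomogeneous_fin_two [Finite R] (n : ℕ) :
    {f : MvPolynomial (Fin 2) R | f.IsHomogeneous n}.Finite :=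
  range_binaryForm (R := R) n ▸ Set.finite_range _

theorem ncard_isHomogeneous_ne_zero_fin_two (n : ℕ) :
    {f : MvPolynomial (Fin 2) R | f.IsHomogeneous n ∧ f ≠ 0}.ncard = Nat.card R ^ (n + 1) - 1 := by
  have hdiff : {f : MvPolynomial (Fin 2) R | f.IsHomogeneous n ∧ f ≠ 0} =
      {f | f.IsHomogeneous n} \ {0} := rfl
  rw [hdiff, Set.ncard_sdiff_singleton_of_mem (isHomogeneous_zero _ R n), ← range_binaryForm,
    ← Set.image_univ, Set.ncard_image_of_injective _ (binaryForm_injective n), Set.ncard_univ,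
    Nat.card_fun, Nat.card_fin]

end BinaryForms

section Counting

variable {K : Type*} [Field K] [Finite K]

theorem mul_card_binaryForm_pow {n : ℕ} {ζ : K} (hζ : IsPrimitiveRoot ζ n) (hn : n ≠ 0) (d : ℕ) :
    n * Nat.card {c : Fin (d * n + 1) → K //
      binaryForm (d * n) c ≠ 0 ∧ ∃ h, h ^ n = binaryForm (d * n) c} = Nat.card K ^ (d + 1) - 1 := by
  rw [card_subtype_binaryForm _ fun f => f ≠ 0 ∧ ∃ h, h ^ n = f,
    mul_ncard_isHomogeneous_pow hζ hn (finite_isHomogeneous_fin_two d),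
    ncard_isHomogeneous_ne_zero_fin_two]

theorem mul_card_binaryForm_C_mul_pow_not_pow {n : ℕ} {ζ : K} (hζ : IsPrimitiveRoot ζ n)
    (hn : n ≠ 0) (d : ℕ) :
    n * Nat.card {c : Fin (d * n + 1) → K //
      (∃ a h, binaryForm (d * n) c = C a * h ^ n) ∧ ¬∃ h, h ^ n = binaryForm (d * n) c} =
      (n - 1) * (Nat.card K ^ (d + 1) - 1) := by
  rw [card_subtype_binaryForm _ fun f => (∃ a h, f = C a * h ^ n) ∧ ¬∃ h, h ^ n = f,
    mul_ncard_isHomogeneous_C_mul_pow_not_pow hζ hn (finite_isHomogeneous_fin_two d),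
    ncard_isHomogeneous_ne_zero_fin_two]

end Counting

theorem sextic_reducible_counts_one_mod_three_general {K L : Type*} [Field K] [Field L]
    [Finite L] [Algebra K L] (d : ℕ) (hK : Nat.card K % 3 = 1) (hL : 3 ∣ Module.finrank K L) :
    Nat.card {c : Fin (d * 3 + 1) → K //
        (∃ (a : K) (h : MvPolynomial (Fin 2) K), binaryForm (d * 3) c = C a * h ^ 3) ∧
        ∃ h₁ h₂ h₃ : MvPolynomial (Fin 2) K, h₁ ≠ h₂ ∧ h₁ ≠ h₃ ∧ h₂ ≠ h₃ ∧
          (Polynomial.X ^ 3 - Polynomial.C (binaryForm (d * 3) c) : Polynomial _) =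
            (Polynomial.X - Polynomial.C h₁) * (Polynomial.X - Polynomial.C h₂) *
              (Polynomial.X - Polynomial.C h₃)} = (Nat.card K ^ (d + 1) - 1) / 3 ∧
    Nat.card {c : Fin (d * 3 + 1) → K //
        ∃ g₁ g₂ g₃ : MvPolynomial (Fin 2) L,
          Polynomial.map (map (algebraMap K L) : _ →+* _)
              (Polynomial.X ^ 3 - Polynomial.C (binaryForm (d * 3) c)) =
            (Polynomial.X - Polynomial.C g₁) * (Polynomial.X - Polynomial.C g₂) *
              (Polynomial.X - Polynomial.C g₃) ∧
          ∀ g ∈ ({g₁, g₂, g₃} : Set (MvPolynomial (Fin 2) L)),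
            g ∉ Set.range (map (algebraMap K L))} = 2 * (Nat.card K ^ (d + 1) - 1) / 3 ∧
    Nat.card {c : Fin (d * 3 + 1) → K // ∃ h : MvPolynomial (Fin 2) K,
      (Polynomial.X ^ 3 - Polynomial.C (binaryForm (d * 3) c) : Polynomial _) =
        (Polynomial.X - Polynomial.C h) ^ 3} = 1 := by
  have : Finite K := Finite.of_injective _ (algebraMap K L).injective
  obtain ⟨ζ, hζ⟩ := exists_isPrimitiveRoot_of_dvd_card_sub_one (K := K) (n := 3) (by omega)
  have hζ' := hζ.map_of_injective (C_injective (Fin 2) K)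
  have hscaled_of_cube (f : MvPolynomial (Fin 2) K) :
      (f ≠ 0 ∧ ∃ h, h ^ 3 = f) → ∃ (a : K) (h : MvPolynomial (Fin 2) K), f = C a * h ^ 3 :=
    fun ⟨_, h, hh⟩ => ⟨1, h, by simp [hh]⟩
  simp only [exists_distinct_linear_factors_iff hζ', and_iff_right_of_imp (hscaled_of_cube _),
    exists_nonrational_linear_factors_iff hζ (exists_pow_eq_algebraMap (L := L) hK hL),
    exists_X_pow_sub_C_eq_X_sub_C_pow_iff (by norm_num : 2 ≤ 3) hζ'.neZero'.ne]
  refine ⟨?_, ?_, ?_⟩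
  · exact Nat.eq_div_of_mul_eq_right three_ne_zero (mul_card_binaryForm_pow hζ three_ne_zero d)
  · exact Nat.eq_div_of_mul_eq_right three_ne_zero
      (mul_card_binaryForm_C_mul_pow_not_pow hζ three_ne_zero d)
  · have hzero : {f : MvPolynomial (Fin 2) K | f.IsHomogeneous (d * 3) ∧ f = 0} = {0} :=
      Set.ext fun f => and_iff_right_of_imp fun hf => hf ▸ isHomogeneous_zero _ K _
    rw [card_subtype_binaryForm _ (· = 0), hzero, Set.ncard_singleton]

/-- For `p ≡ 1 (mod 3)`: among reducible `y³ = f(x,z)` (i.e. `f = a·h³`), exactly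
`(p³−1)/3` factor into three distinct linear factors in `y` over `F_p`, exactly
`2(p³−1)/3` have three conjugate factors over `F_{p³}` (none defined over `F_p`),
and exactly `1` has a triple factor. -/
theorem sextic_reducible_counts_one_mod_three (p : ℕ) [Fact p.Prime] (hp : p % 3 = 1) :
    Nat.card {c : Fin 7 → ZMod p //
        (∃ (a : ZMod p) (h : MvPolynomial (Fin 2) (ZMod p)),
          sexticForm9 p c = MvPolynomial.C a * h ^ 3) ∧
        ∃ h₁ h₂ h₃ : MvPolynomial (Fin 2) (ZMod p), h₁ ≠ h₂ ∧ h₁ ≠ h₃ ∧ h₂ ≠ h₃ ∧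
          sexticCurve9 p c =
            (Polynomial.X - Polynomial.C h₁) * (Polynomial.X - Polynomial.C h₂) *
              (Polynomial.X - Polynomial.C h₃)} = (p ^ 3 - 1) / 3 ∧
    Nat.card {c : Fin 7 → ZMod p //
        ∃ g₁ g₂ g₃ : MvPolynomial (Fin 2) (GaloisField p 3),
          Polynomial.map
              (MvPolynomial.map (algebraMap (ZMod p) (GaloisField p 3)) : _ →+* _)
              (sexticCurve9 p c) =
            (Polynomial.X - Polynomial.C g₁) * (Polynomial.X - Polynomial.C g₂) *
              (Polynomial.X - Polynomial.C g₃) ∧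
          ∀ g ∈ ({g₁, g₂, g₃} : Set (MvPolynomial (Fin 2) (GaloisField p 3))),
            g ∉ Set.range (MvPolynomial.map (algebraMap (ZMod p) (GaloisField p 3)))}
      = 2 * (p ^ 3 - 1) / 3 ∧
    Nat.card {c : Fin 7 → ZMod p //
        ∃ h : MvPolynomial (Fin 2) (ZMod p),
          sexticCurve9 p c = (Polynomial.X - Polynomial.C h) ^ 3} = 1 := by
  have hcounts := sextic_reducible_counts_one_mod_three_general (K := ZMod p) (L := GaloisField p 3)
    2 (by rwa [Nat.card_zmod]) (GaloisField.finrank p three_ne_zero).symm.dvd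
  rwa [Nat.card_zmod] at hcounts
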